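/- Let X be a complex Banach space with a Schauder basis {eₙ}ₙ and let Y be any complex Banach space. Then the mapping Φ : 𝓗𝓛₀(B_X, Y) → 𝓗^∞_s(B_X, 𝓛(X,Y)), Φ(f) = df, is a surjective isometry, where 𝓗^∞_s(B_X, 𝓛(X,Y)) = { g ∈ 𝓗^∞(B_X, 𝓛(X,Y)) : e_k∘d(e_n∘g) = e_n∘d(e_k∘g) for all n, k ∈ ℕ }. -/

import Mathlib

/-!
The Lipschitz constant of a differentiable map on an open convex set is the supremum of the norms
of its differentials, by the mean value inequality; this is the isometry. The symmetry condition
says that the second differential is symmetric, first on pairs of basis vectors and then, by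
density of their span, everywhere; so the elements of `𝓗^∞_s` are exactly the bounded closed
holomorphic `1`-forms, and these have primitives by the Poincaré lemma.

What remains is that `df` is again holomorphic, for `f` defined on an infinite-dimensional space.
The higher-order Schwarz lemma bounds the Taylor remainder of `f` by `4 M (‖x - c‖ / R) ^ 2`,
where `M` bounds `f` on the ball of radius `R` around `c`. Hence the difference quotients of `f` in
a direction `v` converge uniformly, so `x ↦ df(x) v` is holomorphic by the Weierstrass theorem;
as the same remainder bound for `x ↦ df(x) v` is uniform in `‖v‖ ≤ 1`, `df` is holomorphic for
the operator norm.
-/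

open Metric Filter Topology Set

theorem ball_half_subset_ball_of_mem {α : Type*} [PseudoMetricSpace α] {c x : α} {R : ℝ}
    (hx : x ∈ ball c (R / 2)) : ball x (R / 2) ⊆ ball c R :=
  ball_subset_ball' (by linarith [mem_ball.1 hx])

theorem exists_ball_subset_norm_le {α E : Type*} [PseudoMetricSpace α] [SeminormedAddCommGroup E]
    {f : α → E} {U : Set α} {c : α} (hU : U ∈ 𝓝 c) (hf : ContinuousAt f c) :
    ∃ R > 0, ball c R ⊆ U ∧ ∃ M, ∀ x ∈ ball c R, ‖f x‖ ≤ M := by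
  obtain ⟨R, hR, hball⟩ := Metric.mem_nhds_iff.1
    (inter_mem hU (hf.norm.eventually_le_const (lt_add_one ‖f c‖)))
  exact ⟨R, hR, fun x hx => (hball hx).1, ‖f c‖ + 1, fun x hx => (hball hx).2⟩

theorem eventually_norm_smul_lt {𝕜 E : Type*} [NormedField 𝕜] [SeminormedAddCommGroup E]
    [NormedSpace 𝕜 E] (v : E) {r : ℝ} (hr : 0 < r) : ∀ᶠ t : 𝕜 in 𝓝 0, ‖t • v‖ < r :=
  (Continuous.tendsto' (by fun_prop) 0 0 (by simp)).eventually_lt_const hr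

section Holomorphic

variable {X V Y : Type*} [NormedAddCommGroup X] [NormedSpace ℂ X]
  [NormedAddCommGroup V] [NormedSpace ℂ V] [NormedAddCommGroup Y] [NormedSpace ℂ Y]
  {f : X → Y} {U : Set X} {c x : X} {R M : ℝ}

theorem norm_fderiv_le_of_norm_le_on_ball (hR : 0 < R) (hf : DifferentiableOn ℂ f (ball c R))
    (hM : ∀ x ∈ ball c R, ‖f x‖ ≤ M) : ‖fderiv ℂ f c‖ ≤ 2 * M / R := by
  refine Complex.norm_fderiv_le_div_of_mapsTo_ball hf (fun x hx => ?_) hR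
  rw [mem_closedBall, dist_eq_norm]
  linarith [norm_sub_le (f x) (f c), hM x hx, hM c (mem_ball_self hR)]

theorem norm_fderiv_le_of_norm_le_on_ball_of_mem_half (hf : DifferentiableOn ℂ f (ball c R))
    (hM : ∀ x ∈ ball c R, ‖f x‖ ≤ M) (hx : x ∈ ball c (R / 2)) :
    ‖fderiv ℂ f x‖ ≤ 4 * M / R := by
  have hsub := ball_half_subset_ball_of_mem hx
  calc ‖fderiv ℂ f x‖ ≤ 2 * M / (R / 2) :=
        norm_fderiv_le_of_norm_le_on_ball (pos_of_mem_ball hx) (hf.mono hsub)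
          fun y hy => hM y (hsub hy)
    _ = 4 * M / R := by field_simp; ring

theorem norm_sub_sub_fderiv_le_of_norm_le_on_ball (hf : DifferentiableOn ℂ f (ball c R))
    (hM : ∀ x ∈ ball c R, ‖f x‖ ≤ M) (hx : x ∈ ball c R) :
    ‖f x - f c - fderiv ℂ f c (x - c)‖ ≤ 4 * M * (‖x - c‖ / R) ^ 2 := by
  have hR : 0 < R := pos_of_mem_ball hx
  have hM₀ : 0 ≤ M := (norm_nonneg _).trans (hM x hx)
  let g : X → Y := fun z => f z - fderiv ℂ f c (z - c)
  have sub_eq (z : X) : g z - g c = f z - f c - fderiv ℂ f c (z - c) := by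
    simp only [g, sub_self, map_zero, sub_zero]
    abel
  have hg : DifferentiableOn ℂ g (ball c R) := hf.sub (by fun_prop)
  have hg_maps : MapsTo g (ball c R) (closedBall (g c) (4 * M)) := fun z hz => by
    have hz' : ‖z - c‖ ≤ R := (mem_ball_iff_norm.1 hz).le
    have hdz : ‖fderiv ℂ f c (z - c)‖ ≤ 2 * M := calc
      _ ≤ 2 * M / R * ‖z - c‖ := (fderiv ℂ f c).le_of_opNorm_le
        (norm_fderiv_le_of_norm_le_on_ball hR hf hM) _
      _ ≤ 2 * M / R * R := by gcongr
      _ = 2 * M := div_mul_cancel₀ _ hR.ne'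
    rw [mem_closedBall_iff_norm, sub_eq]
    linarith [norm_sub_le (f z - f c) (fderiv ℂ f c (z - c)), norm_sub_le (f z) (f c), hM z hz,
      hM c (mem_ball_self hR)]
  have hg_littleO : (fun z => g z - g c) =o[𝓝 c] fun z => ‖z - c‖ ^ 1 := by
    simp only [sub_eq, pow_one]
    exact (hf.differentiableAt (ball_mem_nhds c hR)).hasFDerivAt.isLittleO.norm_right
  simpa [dist_eq_norm, sub_eq] using
    Complex.dist_le_mul_div_pow_of_mapsTo_ball_of_isLittleO hg hg_maps hg_littleO hx

theorem norm_inv_smul_sub_fderiv_le_of_norm_le_on_ball (hf : DifferentiableOn ℂ f (ball c R))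
    (hM : ∀ x ∈ ball c R, ‖f x‖ ≤ M) {v : X} {t : ℂ} (ht : t ≠ 0) (htv : ‖t • v‖ < R) :
    ‖t⁻¹ • (f (c + t • v) - f c) - fderiv ℂ f c v‖ ≤ 4 * M * (‖v‖ / R) ^ 2 * ‖t‖ := by
  have remainder : ‖f (c + t • v) - f c - fderiv ℂ f c (t • v)‖ ≤ 4 * M * (‖t • v‖ / R) ^ 2 := by
    simpa using norm_sub_sub_fderiv_le_of_norm_le_on_ball hf hM (x := c + t • v) (by simpa)
  have factor : t⁻¹ • (f (c + t • v) - f c) - fderiv ℂ f c v =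
      t⁻¹ • (f (c + t • v) - f c - fderiv ℂ f c (t • v)) := by
    rw [map_smul, smul_sub _ (f (c + _) - f c), inv_smul_smul₀ ht]
  have ht' : ‖t‖ ≠ 0 := norm_ne_zero_iff.2 ht
  calc _ ≤ ‖t‖⁻¹ * (4 * M * (‖t • v‖ / R) ^ 2) := by
        rw [factor, norm_smul, norm_inv]
        gcongr
    _ = 4 * M * (‖v‖ / R) ^ 2 * ‖t‖ := by
        rw [norm_smul]
        field_simp

theorem tendstoUniformlyOn_inv_smul_sub_fderiv (hR : 0 < R)
    (hf : DifferentiableOn ℂ f (ball c R)) (hM : ∀ x ∈ ball c R, ‖f x‖ ≤ M) (v : X) :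
    TendstoUniformlyOn (fun (t : ℂ) x => t⁻¹ • (f (x + t • v) - f x)) (fun x => fderiv ℂ f x v)
      (𝓝[≠] 0) (ball c (R / 2)) := by
  have small_step : ∀ᶠ t : ℂ in 𝓝[≠] 0, ‖t • v‖ < R / 2 :=
    nhdsWithin_le_nhds (eventually_norm_smul_lt v (half_pos hR))
  have small_error (ε : ℝ) (hε : 0 < ε) :
      ∀ᶠ t : ℂ in 𝓝[≠] 0, 4 * M * (‖v‖ / (R / 2)) ^ 2 * ‖t‖ < ε :=
    nhdsWithin_le_nhds
      ((Continuous.tendsto' (by fun_prop) 0 0 (by simp)).eventually_lt_const hε)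
  rw [Metric.tendstoUniformlyOn_iff]
  intro ε hε
  filter_upwards [small_step, small_error ε hε, self_mem_nhdsWithin] with t htv htε ht x hx
  have hsub := ball_half_subset_ball_of_mem hx
  rw [dist_comm, dist_eq_norm]
  exact (norm_inv_smul_sub_fderiv_le_of_norm_le_on_ball (hf.mono hsub)
    (fun y hy => hM y (hsub hy)) ht htv).trans_lt htε

theorem uniformCauchySeqOn_fderiv {ι : Type*} {φ : Filter ι} {F : ι → X → Y} (hR : 0 < R)
    (hF : ∀ᶠ i in φ, DifferentiableOn ℂ (F i) (ball c R))
    (hC : UniformCauchySeqOn F φ (ball c R)) :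
    UniformCauchySeqOn (fun i => fderiv ℂ (F i)) φ (ball c (R / 2)) := by
  intro u hu
  obtain ⟨ε, hε, hεu⟩ := Metric.mem_uniformity_dist.1 hu
  have hsub : ball c (R / 2) ⊆ ball c R := ball_subset_ball (by linarith)
  filter_upwards [hC _ (dist_mem_uniformity (show 0 < ε * R / 8 by positivity)), hF.prod_mk hF]
    with ⟨i, j⟩ hij ⟨hi, hj⟩ x hx
  have diff_at {k} (hk : DifferentiableOn ℂ (F k) (ball c R)) : DifferentiableAt ℂ (F k) x :=
    hk.differentiableAt (isOpen_ball.mem_nhds (hsub hx))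
  apply hεu
  calc dist (fderiv ℂ (F i) x) (fderiv ℂ (F j) x) = ‖fderiv ℂ (fun y => F i y - F j y) x‖ := by
        rw [fderiv_fun_sub (diff_at hi) (diff_at hj), dist_eq_norm]
    _ ≤ 4 * (ε * R / 8) / R :=
        norm_fderiv_le_of_norm_le_on_ball_of_mem_half (hi.sub hj)
          (fun y hy => by simpa [dist_eq_norm] using (hij y hy).le) hx
    _ = ε / 2 := by field_simp; ring
    _ < ε := half_lt_self hε

theorem differentiableOn_of_tendstoUniformlyOn [CompleteSpace Y] {ι : Type*} {φ : Filter ι}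
    [φ.NeBot] {F : ι → X → Y} (hU : IsOpen U) (hF : ∀ᶠ i in φ, DifferentiableOn ℂ (F i) U)
    (hlim : TendstoUniformlyOn F f φ U) : DifferentiableOn ℂ f U := by
  intro c hc
  obtain ⟨R, hR, hRU⟩ := Metric.isOpen_iff.1 hU c hc
  have hcauchy := uniformCauchySeqOn_fderiv hR (hF.mono fun i hi => hi.mono hRU)
    (hlim.uniformCauchySeqOn.mono hRU)
  have hball : ball c (R / 2) ∈ 𝓝 c := ball_mem_nhds c (half_pos hR)
  have hexists : ∀ x ∈ ball c (R / 2), ∃ L, Tendsto (fun i => fderiv ℂ (F i) x) φ (𝓝 L) :=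
    fun x hx => CompleteSpace.complete (hcauchy.cauchy_map hx)
  choose! f' hf' using hexists
  have hderiv : TendstoUniformlyOnFilter (fun i => fderiv ℂ (F i)) f' φ (𝓝 c) :=
    (hcauchy.tendstoUniformlyOn_of_tendsto hf').tendstoUniformlyOnFilter.mono_right
      (le_principal_iff.2 hball)
  have hhas : ∀ᶠ p : ι × X in φ ×ˢ 𝓝 c, HasFDerivAt (F p.1) (fderiv ℂ (F p.1) p.2) p.2 := by
    filter_upwards [hF.prod_mk (hU.mem_nhds hc)] with p ⟨hp, hpU⟩
    exact (hp.differentiableAt (hU.mem_nhds hpU)).hasFDerivAt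
  have hpt : ∀ᶠ y in 𝓝 c, Tendsto (fun i => F i y) φ (𝓝 (f y)) :=
    eventually_of_mem (hU.mem_nhds hc) fun y hy => hlim.tendsto_at hy
  exact (hasFDerivAt_of_tendstoUniformlyOnFilter hderiv hhas
    hpt).differentiableAt.differentiableWithinAt

theorem differentiableOn_fderiv_apply [CompleteSpace Y] (hU : IsOpen U)
    (hf : DifferentiableOn ℂ f U) (v : X) : DifferentiableOn ℂ (fun x => fderiv ℂ f x v) U := by
  intro c hc
  obtain ⟨R, hR, hRU, M, hM⟩ := exists_ball_subset_norm_le (hU.mem_nhds hc)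
    (hf.continuousOn.continuousAt (hU.mem_nhds hc))
  have hsmall : ∀ᶠ t : ℂ in 𝓝[≠] 0, ‖t • v‖ < R / 2 :=
    nhdsWithin_le_nhds (eventually_norm_smul_lt v (half_pos hR))
  have hquot : ∀ᶠ t : ℂ in 𝓝[≠] 0,
      DifferentiableOn ℂ (fun x => t⁻¹ • (f (x + t • v) - f x)) (ball c (R / 2)) := by
    filter_upwards [hsmall] with t ht
    have hshift : MapsTo (fun x => x + t • v) (ball c (R / 2)) U := fun x hx =>
      hRU (ball_half_subset_ball_of_mem hx (by simpa using ht))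
    have hsub : ball c (R / 2) ⊆ U := (ball_subset_ball (by linarith)).trans hRU
    exact ((hf.comp (by fun_prop) hshift).sub (hf.mono hsub)).const_smul _
  exact ((differentiableOn_of_tendstoUniformlyOn isOpen_ball hquot
    (tendstoUniformlyOn_inv_smul_sub_fderiv hR (hf.mono hRU) hM v)).differentiableAt
      (ball_mem_nhds c (half_pos hR))).differentiableWithinAt

theorem exists_clm_eq_fderiv_apply {G : X → V →L[ℂ] Y} (hR : 0 < R)
    (hG : ∀ v, DifferentiableOn ℂ (fun x => G x v) (ball c R))
    (hM : ∀ x ∈ ball c R, ‖G x‖ ≤ M) :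
    ∃ D : V →L[ℂ] X →L[ℂ] Y, ∀ v, D v = fderiv ℂ (fun x => G x v) c := by
  have hGc (v : V) : DifferentiableAt ℂ (fun x => G x v) c :=
    (hG v).differentiableAt (ball_mem_nhds c hR)
  let D : V →ₗ[ℂ] X →L[ℂ] Y :=
    { toFun v := fderiv ℂ (fun x => G x v) c
      map_add' v w := by simp only [map_add, fderiv_fun_add (hGc v) (hGc w)]
      map_smul' a v := by simp only [map_smul, fderiv_fun_const_smul (hGc v), RingHom.id_apply] }
  refine ⟨D.mkContinuous (2 * M / R) fun v => ?_, fun v => rfl⟩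
  calc ‖D v‖ ≤ 2 * (M * ‖v‖) / R := norm_fderiv_le_of_norm_le_on_ball hR (hG v)
        fun x hx => (G x).le_of_opNorm_le (hM x hx) v
    _ = 2 * M / R * ‖v‖ := by ring

theorem differentiableAt_clm_of_forall_apply {G : X → V →L[ℂ] Y} (hR : 0 < R)
    (hG : ∀ v, DifferentiableOn ℂ (fun x => G x v) (ball c R))
    (hM : ∀ x ∈ ball c R, ‖G x‖ ≤ M) : DifferentiableAt ℂ G c := by
  have hM₀ : 0 ≤ M := (norm_nonneg _).trans (hM c (mem_ball_self hR))
  obtain ⟨D, hD⟩ := exists_clm_eq_fderiv_apply hR hG hM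
  have remainder (x : X) (hx : x ∈ ball c R) :
      ‖G x - G c - D.flip (x - c)‖ ≤ 4 * M * (‖x - c‖ / R) ^ 2 := by
    refine ContinuousLinearMap.opNorm_le_bound _ (by positivity) fun v => ?_
    calc _ = ‖G x v - G c v - fderiv ℂ (fun x => G x v) c (x - c)‖ := by simp [hD]
      _ ≤ 4 * (M * ‖v‖) * (‖x - c‖ / R) ^ 2 :=
          norm_sub_sub_fderiv_le_of_norm_le_on_ball (hG v)
            (fun y hy => (G y).le_of_opNorm_le (hM y hy) v) hx
      _ = 4 * M * (‖x - c‖ / R) ^ 2 * ‖v‖ := by ring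
  have quadratic : (fun x => G x - G c - D.flip (x - c)) =O[𝓝 c] fun x => ‖x - c‖ ^ 2 := by
    refine .of_bound (4 * M / R ^ 2) ?_
    filter_upwards [ball_mem_nhds c hR] with x hx
    calc _ ≤ 4 * M * (‖x - c‖ / R) ^ 2 := remainder x hx
      _ = 4 * M / R ^ 2 * ‖‖x - c‖ ^ 2‖ := by
          rw [norm_pow, norm_norm]
          ring
  exact (HasFDerivAt.of_isLittleO (quadratic.trans_isLittleO
    (Asymptotics.isLittleO_pow_sub_sub c one_lt_two))).differentiableAt

theorem differentiableOn_fderiv [CompleteSpace Y] (hU : IsOpen U) (hf : DifferentiableOn ℂ f U) :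
    DifferentiableOn ℂ (fderiv ℂ f) U := by
  intro c hc
  obtain ⟨R, hR, hRU, M, hM⟩ := exists_ball_subset_norm_le (hU.mem_nhds hc)
    (hf.continuousOn.continuousAt (hU.mem_nhds hc))
  have hsub : ball c (R / 2) ⊆ U := (ball_subset_ball (by linarith)).trans hRU
  exact (differentiableAt_clm_of_forall_apply (half_pos hR)
    (fun v => (differentiableOn_fderiv_apply hU hf v).mono hsub)
    fun x hx => norm_fderiv_le_of_norm_le_on_ball_of_mem_half
      (hf.mono hRU) hM hx).differentiableWithinAt

end Holomorphic

section LipschitzConstant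

variable {𝕜 X Y : Type*} [RCLike 𝕜] [NormedAddCommGroup X] [NormedSpace ℝ X] [NormedSpace 𝕜 X]
  [NormedAddCommGroup Y] [NormedSpace 𝕜 Y] {f : X → Y} {U : Set X}

theorem setOf_lipschitzConst_eq_upperBounds_norm_fderiv (hU : IsOpen U) (hconv : Convex ℝ U)
    (hne : U.Nonempty) (hf : DifferentiableOn 𝕜 f U) :
    {K : ℝ | 0 ≤ K ∧ ∀ x ∈ U, ∀ y ∈ U, ‖f x - f y‖ ≤ K * ‖x - y‖} =
      upperBounds {r : ℝ | ∃ z ∈ U, r = ‖fderiv 𝕜 f z‖} := by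
  ext K
  constructor
  · rintro ⟨hK₀, hK⟩ _ ⟨z, hz, rfl⟩
    exact norm_fderiv_le_of_lip' 𝕜 hK₀ (eventually_of_mem (hU.mem_nhds hz) fun x hx => hK x hx z hz)
  · intro hK
    have bound : ∀ z ∈ U, ‖fderiv 𝕜 f z‖ ≤ K := fun z hz => hK ⟨z, hz, rfl⟩
    obtain ⟨z, hz⟩ := hne
    exact ⟨(norm_nonneg _).trans (bound z hz), fun x hx y hy =>
      hconv.norm_image_sub_le_of_norm_fderiv_le
        (fun z hz => hf.differentiableAt (hU.mem_nhds hz)) bound hy hx⟩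

theorem sInf_lipschitzConst_eq_sSup_norm_fderiv (hU : IsOpen U) (hconv : Convex ℝ U)
    (hne : U.Nonempty) (hf : DifferentiableOn 𝕜 f U) {K : NNReal} (hK : LipschitzOnWith K f U) :
    sInf {K : ℝ | 0 ≤ K ∧ ∀ x ∈ U, ∀ y ∈ U, ‖f x - f y‖ ≤ K * ‖x - y‖} =
      sSup {r : ℝ | ∃ z ∈ U, r = ‖fderiv 𝕜 f z‖} := by
  rw [setOf_lipschitzConst_eq_upperBounds_norm_fderiv hU hconv hne hf]
  obtain ⟨z, hz⟩ := hne
  refine csInf_upperBounds_eq_csSup ⟨K, ?_⟩ ⟨_, z, hz, rfl⟩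
  rintro _ ⟨w, hw, rfl⟩
  exact norm_fderiv_le_of_lipschitzOn 𝕜 (hU.mem_nhds hw) hK

end LipschitzConstant

section Symmetry

variable {𝕜 ι X Y : Type*} [NontriviallyNormedField 𝕜] [NormedAddCommGroup X] [NormedSpace 𝕜 X]
  [NormedAddCommGroup Y] [NormedSpace 𝕜 Y]

theorem dense_span_range_of_forall_tendsto_sum {e : ℕ → X}
    (he : ∀ x : X, ∃ a : ℕ → 𝕜,
      Tendsto (fun N => ∑ n ∈ Finset.range N, a n • e n) atTop (𝓝 x)) :
    Dense (Submodule.span 𝕜 (range e) : Set X) := fun x => by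
  obtain ⟨a, ha⟩ := he x
  refine mem_closure_of_tendsto ha (Eventually.of_forall fun N => ?_)
  exact Submodule.sum_mem _ fun n _ =>
    Submodule.smul_mem _ _ (Submodule.subset_span (mem_range_self n))

theorem clm_apply_comm_of_dense_span {e : ι → X}
    (he : Dense (Submodule.span 𝕜 (range e) : Set X)) {D : X →L[𝕜] X →L[𝕜] Y}
    (hD : ∀ i j, D (e i) (e j) = D (e j) (e i)) (x y : X) : D x y = D y x := by
  suffices D = D.flip from DFunLike.congr_fun (DFunLike.congr_fun this x) y
  refine ContinuousLinearMap.ext_on he (forall_mem_range.2 fun i => ?_)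
  exact ContinuousLinearMap.ext_on he (forall_mem_range.2 fun j => hD i j)

theorem fderiv_clm_apply_const {V : Type*} [NormedAddCommGroup V] [NormedSpace 𝕜 V]
    {g : X → V →L[𝕜] Y} {z : X} (hg : DifferentiableAt 𝕜 g z) (u : X) (v : V) :
    fderiv 𝕜 (fun x => g x v) z u = fderiv 𝕜 g z u v := by
  simp [fderiv_clm_apply hg (differentiableAt_const v)]

end Symmetry

section HolomorphicLipschitz

variable {ι X Y : Type*} [NormedAddCommGroup X] [NormedSpace ℂ X]
  [NormedAddCommGroup Y] [NormedSpace ℂ Y] {U : Set X} {x₀ : X} {e : ι → X} {f : X → Y}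

theorem exists_hasFDerivAt_of_fderiv_apply_comm_of_dense_span [CompleteSpace Y] (hU : IsOpen U)
    (hconv : Convex ℝ U) (he : Dense (Submodule.span ℂ (range e) : Set X)) {g : X → X →L[ℂ] Y}
    (hg : DifferentiableOn ℂ g U)
    (hsymm : ∀ i j, ∀ z ∈ U,
      fderiv ℂ (fun u => g u (e i)) z (e j) = fderiv ℂ (fun u => g u (e j)) z (e i)) :
    ∃ f : X → Y, ∀ z ∈ U, HasFDerivAt f (g z) z := by
  have hdiff (z) (hz : z ∈ U) : DifferentiableAt ℂ g z := hg.differentiableAt (hU.mem_nhds hz)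
  refine hconv.exists_forall_hasFDerivAt_of_fderiv_symmetric hU (hg.restrictScalars ℝ)
    fun z hz x y => ?_
  rw [(hdiff z hz).fderiv_restrictScalars ℝ]
  refine clm_apply_comm_of_dense_span he (fun i j => ?_) x y
  simpa only [fderiv_clm_apply_const (hdiff z hz)] using hsymm j i z hz

/-- Membership in `𝓗𝓛₀(U, Y)`, the holomorphic Lipschitz maps on `U` vanishing at the base point
`x₀`. A map on `U` is encoded as a total function on `X`. -/
def IsHolLipschitz (U : Set X) (x₀ : X) (f : X → Y) : Prop :=
  DifferentiableOn ℂ f U ∧ f x₀ = 0 ∧ ∃ K : NNReal, LipschitzOnWith K f U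

/-- Membership in `𝓗^∞_s(U, 𝓛(X, Y))`, the bounded holomorphic operator-valued maps on `U` whose
differential is symmetric on the vectors of the family `e`. As `fderiv` is taken in `X`, the notion
depends only on the restriction of `g` to `U` when `U` is open. -/
def IsBddHolSymm (U : Set X) (e : ι → X) (g : X → X →L[ℂ] Y) : Prop :=
  DifferentiableOn ℂ g U ∧ (∃ C : ℝ, ∀ z ∈ U, ‖g z‖ ≤ C) ∧
    ∀ i j, ∀ z ∈ U, fderiv ℂ (fun u => g u (e i)) z (e j) = fderiv ℂ (fun u => g u (e j)) z (e i)

theorem IsHolLipschitz.isBddHolSymm_fderiv [CompleteSpace Y] (hU : IsOpen U)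
    (hf : IsHolLipschitz U x₀ f) (e : ι → X) : IsBddHolSymm U e (fderiv ℂ f) := by
  obtain ⟨hd, -, K, hK⟩ := hf
  have hdd := differentiableOn_fderiv hU hd
  refine ⟨hdd, ⟨K, fun z hz => norm_fderiv_le_of_lipschitzOn ℂ (hU.mem_nhds hz) hK⟩,
    fun i j z hz => ?_⟩
  have hddz := hdd.differentiableAt (hU.mem_nhds hz)
  have hfz : ∀ᶠ y in 𝓝 z, HasFDerivAt f (fderiv ℂ f y) y := eventually_of_mem (hU.mem_nhds hz)
    fun y hy => (hd.differentiableAt (hU.mem_nhds hy)).hasFDerivAt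
  rw [fderiv_clm_apply_const hddz, fderiv_clm_apply_const hddz]
  exact second_derivative_symmetric_of_eventually hfz hddz.hasFDerivAt _ _

theorem IsBddHolSymm.exists_isHolLipschitz_fderiv_eq [CompleteSpace Y] (hU : IsOpen U)
    (hconv : Convex ℝ U) (he : Dense (Submodule.span ℂ (range e) : Set X)) (x₀ : X)
    {g : X → X →L[ℂ] Y} (hg : IsBddHolSymm U e g) :
    ∃ f : X → Y, IsHolLipschitz U x₀ f ∧ ∀ z ∈ U, fderiv ℂ f z = g z := by
  obtain ⟨hd, ⟨C, hC⟩, hsymm⟩ := hg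
  obtain ⟨p, hp⟩ :=
    exists_hasFDerivAt_of_fderiv_apply_comm_of_dense_span hU hconv he hd hsymm
  have hf (z) (hz : z ∈ U) : HasFDerivAt (fun x => p x - p x₀) (g z) z := (hp z hz).sub_const _
  have hlip : LipschitzOnWith C.toNNReal (fun x => p x - p x₀) U :=
    hconv.lipschitzOnWith_of_nnnorm_hasFDerivWithin_le (fun z hz => (hf z hz).hasFDerivWithinAt)
      fun z hz => NNReal.le_toNNReal_of_coe_le (hC z hz)
  exact ⟨fun x => p x - p x₀, ⟨fun z hz => (hf z hz).differentiableAt.differentiableWithinAt,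
    sub_self _, _, hlip⟩, fun z hz => (hf z hz).fderiv⟩

theorem stmt15_general [CompleteSpace Y] (hU : IsOpen U) (hconv : Convex ℝ U) (hx₀ : x₀ ∈ U)
    (he : Dense (Submodule.span ℂ (range e) : Set X)) :
    (∀ f : X → Y, IsHolLipschitz U x₀ f → IsBddHolSymm U e (fderiv ℂ f)) ∧
    (∀ f : X → Y, IsHolLipschitz U x₀ f →
      sInf {K : ℝ | 0 ≤ K ∧ ∀ x ∈ U, ∀ y ∈ U, ‖f x - f y‖ ≤ K * ‖x - y‖} =
        sSup {r : ℝ | ∃ z ∈ U, r = ‖fderiv ℂ f z‖}) ∧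
    (∀ g : X → (X →L[ℂ] Y), IsBddHolSymm U e g →
      ∃ f : X → Y, IsHolLipschitz U x₀ f ∧ ∀ z ∈ U, fderiv ℂ f z = g z) :=
  ⟨fun _ hf => hf.isBddHolSymm_fderiv hU e,
    fun _ ⟨hd, _, _, hK⟩ => sInf_lipschitzConst_eq_sSup_norm_fderiv hU hconv ⟨x₀, hx₀⟩ hd hK,
    fun _ hg => hg.exists_isHolLipschitz_fderiv_eq hU hconv he x₀⟩

end HolomorphicLipschitz

/-- Let `X` be a complex Banach space with a Schauder basis `{eₙ}` and `Y` any
complex Banach space.  Then `Φ : 𝓗𝓛₀(B_X, Y) → 𝓗^∞_s(B_X, 𝓛(X,Y))`, `Φ f = df`, is a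
surjective isometry, where
`𝓗^∞_s(B_X, 𝓛(X,Y)) = {g ∈ 𝓗^∞(B_X, 𝓛(X,Y)) : e_k ∘ d(e_n ∘ g) = e_n ∘ d(e_k ∘ g) ∀ n, k}`. -/
theorem stmt15 (X Y : Type*) [NormedAddCommGroup X] [NormedSpace ℂ X] [CompleteSpace X]
    [NormedAddCommGroup Y] [NormedSpace ℂ Y] [CompleteSpace Y]
    (e : ℕ → X)
    (hbasis : ∀ x : X, ∃! a : ℕ → ℂ,
      Filter.Tendsto (fun N => ∑ n ∈ Finset.range N, a n • e n) Filter.atTop (nhds x)) :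
    let B := Metric.ball (0 : X) 1
    let HL0 : (X → Y) → Prop := fun f =>
      DifferentiableOn ℂ f B ∧ f 0 = 0 ∧ ∃ K : NNReal, LipschitzOnWith K f B
    let Hs : (X → (X →L[ℂ] Y)) → Prop := fun g =>
      DifferentiableOn ℂ g B ∧ (∃ C : ℝ, ∀ z ∈ B, ‖g z‖ ≤ C) ∧
      ∀ n m : ℕ, ∀ z ∈ B,
        fderiv ℂ (fun u => g u (e n)) z (e m) = fderiv ℂ (fun u => g u (e m)) z (e n)
    (∀ f : X → Y, HL0 f → Hs (fun z => fderiv ℂ f z)) ∧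
    (∀ f : X → Y, HL0 f →
      sInf {K : ℝ | 0 ≤ K ∧ ∀ x ∈ B, ∀ y ∈ B, ‖f x - f y‖ ≤ K * ‖x - y‖} =
        sSup {r : ℝ | ∃ z ∈ B, r = ‖fderiv ℂ f z‖}) ∧
    (∀ g : X → (X →L[ℂ] Y), Hs g →
      ∃ f : X → Y, HL0 f ∧ ∀ z ∈ B, fderiv ℂ f z = g z) := by
  exact stmt15_general isOpen_ball (convex_ball 0 1) (mem_ball_self one_pos)
    (dense_span_range_of_forall_tendsto_sum fun x => (hbasis x).exists)
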